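/- (Combinatorial core of Lemma 3.1.) Let e be an admissible tableau supported on X(v_6). Then there exist pairwise distinct row indices i_1, …, i_r ∈ {1,…,2k} with r ∈ {2,4,6} such that the multiset {S(i_1),…,S(i_r)} of their small sets equals one of the following twelve multisets: X_1 = {A∪{4n−1,4n+1,4n+2}, B∪{4n−2,4n}}; X_2 = {A∪{4n−2,4n+1,4n+2}, B∪{4n−1,4n}}; X_3 = {A∪{4n−1,4n,4n+2}, B∪{4n−2,4n+1}}; X_4 = {A∪{4n−2,4n,4n+2}, B∪{4n−1,4n+1}}; X_5 = {A∪{4n−1,4n,4n+1}, B∪{4n−2,4n+2}}; X_6 = {A∪{4n−2,4n,4n+1}, B∪{4n−1,4n+2}}; Y_1 = {A∪{4n−2,4n−1,4n+2}, A∪{4n,4n+1,4n+2}, B∪{4n−2,4n}, B∪{4n−1,4n+1}}; Y_2 = {A∪{4n−2,4n−1,4n+1}, A∪{4n,4n+1,4n+2}, B∪{4n−2,4n}, B∪{4n−1,4n+2}}; Y_3 = {A∪{4n−2,4n−1,4n,4n+1,4n+2}, A∪{4n}, B∪{4n−2,4n+1}, B∪{4n−1,4n+2}}; Y_4 = {A∪{4n−2,4n−1,4n},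 A∪{4n,4n+1,4n+2}, B∪{4n−2,4n+1}, B∪{4n−1,4n+2}}; Z_1 = {A∪{4n−2,4n−1,4n}, A∪{4n−2,4n+1,4n+2}, A∪{4n,4n+1,4n+2}, B∪{4n−2,4n}, B∪{4n−1,4n+1}, B∪{4n−1,4n+2}}; Z_2 = {A∪{4n−2,4n−1,4n,4n+1,4n+2}, A∪{4n−2,4n+1,4n+2}, A∪{4n}, B∪{4n−2,4n}, B∪{4n−1,4n+1}, B∪{4n−1,4n+2}}. -/

import Mathlib

/-!
Condition (R3) makes every row contain exactly one of `t` and `8n+5-t` (`occ_add_occ`), so by (R5)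
every `t ≤ 4n+2` occurs in exactly `k` of the `2k` rows (`sum_occ`). The number of entries `≤ m` of
a row is antitone in the row index, has average `m/2`, and is bounded below by the support
condition.

For `m = 2j ≤ 4n-4` the lower bound equals the average, so every row has exactly `j` entries
`≤ 2j`. Hence the odd values `≤ 4n-3` fill exactly the first `k` rows and the even values `≤ 4n-4`
the last `k` (`occ_odd`, `occ_even`): an upper row contains `A` and a lower row contains `B`. The
same averaging at `m = 4n-1` and, using the parity condition (R4), at `m = 4n+2` shows that a lower
row has one further small value in `{4n-2, 4n-1}` and one in `{4n, 4n+1, 4n+2}`, while an upper row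
has an odd number of further small values (`rowCode_mem`). So the small set of a row is determined
by its code, the six bits recording which of `4n-3, …, 4n+2` occur (`smallSet_eq_codeSet`), and
there are 16 possible upper and 6 possible lower codes.

The multiplicities of the codes satisfy linear equations (each value occurs `k` times), and codes
of two rows are comparable for the order by prefix counts (`rowCode_comparable`). If none of the
twelve configurations had all its codes present, every zero pattern of the multiplicities would
give an infeasible linear system (`core`, `exists_target`). Choosing one row for each code of a
configuration that is present gives the theorem.
-/

/-- The "small set" `S(i) = { e(i,j) : 1 ≤ j ≤ 4n+2, e(i,j) ≤ 4n+2 }` of row `i`. -/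
def smallSet (n : ℕ) (e : ℕ → ℕ → ℕ) (i : ℕ) : Finset ℕ :=
  ((Finset.Icc 1 (4*n+2)).filter (fun j => e i j ≤ 4*n+2)).image (e i)

/-- `A = {1,3,5,…,4n-3}`, the odd integers `≤ 4n-3`. -/
def setA (n : ℕ) : Finset ℕ := (Finset.Icc 1 (4*n-3)).filter (fun t => ¬ 2 ∣ t)

/-- `B = {2,4,…,4n-4}`, the even integers `≤ 4n-4`. -/
def setB (n : ℕ) : Finset ℕ := (Finset.Icc 1 (4*n-4)).filter (fun t => 2 ∣ t)

/-- An admissible tableau: `e i j ∈ {1,…,8n+4}` for `1 ≤ i ≤ 2k`, `1 ≤ j ≤ 4n+2`,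
subject to the conditions (R1)–(R5). -/
structure IsAdmissible (n k : ℕ) (e : ℕ → ℕ → ℕ) : Prop where
  mem_range : ∀ i j, 1 ≤ i → i ≤ 2*k → 1 ≤ j → j ≤ 4*n+2 → 1 ≤ e i j ∧ e i j ≤ 8*n+4
  /-- (R1) rows strictly increase -/
  row_strict : ∀ i j, 1 ≤ i → i ≤ 2*k → 1 ≤ j → j < 4*n+2 → e i j < e i (j+1)
  /-- (R2) columns are nondecreasing -/
  col_mono : ∀ i j, 1 ≤ i → i < 2*k → 1 ≤ j → j ≤ 4*n+2 → e i j ≤ e (i+1) j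
  /-- (R3) no row contains both `t` and `8n+5-t` -/
  no_pair : ∀ i j j', 1 ≤ i → i ≤ 2*k → 1 ≤ j → j ≤ 4*n+2 → 1 ≤ j' → j' ≤ 4*n+2 →
    e i j + e i j' ≠ 8*n+5
  /-- (R4) each row has an even number of entries `> 4n+2` -/
  even_big : ∀ i, 1 ≤ i → i ≤ 2*k →
    Even (((Finset.Icc 1 (4*n+2)).filter (fun j => 4*n+2 < e i j)).card)
  /-- (R5) `t` and `8n+5-t` occur equally often in the tableau -/
  balanced : ∀ t, 1 ≤ t → t ≤ 8*n+4 →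
    (((Finset.Icc 1 (2*k)) ×ˢ (Finset.Icc 1 (4*n+2))).filter
      (fun p => e p.1 p.2 = t)).card =
    (((Finset.Icc 1 (2*k)) ×ˢ (Finset.Icc 1 (4*n+2))).filter
      (fun p => e p.1 p.2 = 8*n+5-t)).card

/-- The first `4n+2` entries of the one-line notation of `v₆`. -/
def bnd (n : ℕ) (j : ℕ) : ℕ :=
  if j ≤ 2*n-2 then 2*j
  else if j = 2*n-1 then 4*n-1
  else if j = 2*n then 4*n+2
  else if j = 2*n+1 then 4*n+4
  else if j = 2*n+2 then 4*n+5
  else if j = 2*n+3 then 4*n+7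
  else 2*j

/-- The tableau is supported on the Schubert variety `X(v₆)`. -/
def SupportedOnXv6 (n k : ℕ) (e : ℕ → ℕ → ℕ) : Prop :=
  ∀ j, 1 ≤ j → j ≤ 4*n+2 → e (2*k) j ≤ bnd n j

section Helper

open Finset

/-! ### Rows of an admissible tableau -/

/-- The number of entries `≤ m` in row `i`. -/
def rowCount (n : ℕ) (e : ℕ → ℕ → ℕ) (i m : ℕ) : ℕ :=
  #{j ∈ Icc 1 (4*n+2) | e i j ≤ m}

/-- The multiplicity (`0` or `1`) of the value `t` in row `i`. -/
def occ (n : ℕ) (e : ℕ → ℕ → ℕ) (i t : ℕ) : ℕ :=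
  #{j ∈ Icc 1 (4*n+2) | e i j = t}

section Rows

variable {n k : ℕ} {e : ℕ → ℕ → ℕ}

lemma row_lt (he : IsAdmissible n k e) {i j j' : ℕ} (hi : 1 ≤ i) (hi' : i ≤ 2*k)
    (hj : 1 ≤ j) (hjj : j < j') (hj' : j' ≤ 4*n+2) : e i j < e i j' := by
  induction j', hjj using Nat.le_induction with
  | base => exact he.row_strict i j hi hi' hj (by omega)
  | succ m hm ih =>
    exact (ih (by omega)).trans (he.row_strict i m hi hi' (by omega) (by omega))

lemma row_inj (he : IsAdmissible n k e) {i j j' : ℕ} (hi : 1 ≤ i) (hi' : i ≤ 2*k)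
    (hj : j ∈ Icc 1 (4*n+2)) (hj' : j' ∈ Icc 1 (4*n+2)) (h : e i j = e i j') : j = j' := by
  rw [mem_Icc] at hj hj'
  rcases lt_trichotomy j j' with h1 | h1 | h1
  · have := row_lt he hi hi' hj.1 h1 hj'.2
    omega
  · exact h1
  · have := row_lt he hi hi' hj'.1 h1 hj.2
    omega

lemma col_le (he : IsAdmissible n k e) {i i' j : ℕ} (hi : 1 ≤ i) (hii : i ≤ i')
    (hi' : i' ≤ 2*k) (hj : 1 ≤ j) (hj' : j ≤ 4*n+2) : e i j ≤ e i' j := by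
  induction i', hii using Nat.le_induction with
  | base => exact le_rfl
  | succ m hm ih =>
    exact (ih (by omega)).trans (he.col_mono m j (by omega) (by omega) hj hj')

lemma rowCount_anti (he : IsAdmissible n k e) {i i' : ℕ} (m : ℕ) (hi : 1 ≤ i) (hii : i ≤ i')
    (hi' : i' ≤ 2*k) : rowCount n e i' m ≤ rowCount n e i m := by
  refine card_le_card fun j hj => ?_
  simp only [mem_filter, mem_Icc] at hj ⊢
  exact ⟨hj.1, (col_le he hi hii hi' hj.1.1 hj.1.2).trans hj.2⟩

lemma le_rowCount (he : IsAdmissible n k e) {i j m : ℕ} (hi : 1 ≤ i) (hi' : i ≤ 2*k)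
    (hj : j ≤ 4*n+2) (h : e i j ≤ m) : j ≤ rowCount n e i m := by
  have : Icc 1 j ⊆ {j ∈ Icc 1 (4*n+2) | e i j ≤ m} := by
    intro j' hj'
    simp only [mem_filter, mem_Icc] at hj' ⊢
    refine ⟨by omega, ?_⟩
    rcases hj'.2.eq_or_lt with rfl | h1
    · exact h
    · exact (row_lt he hi hi' hj'.1 h1 hj).le.trans h
  simpa [rowCount] using card_le_card this

lemma rowCount_zero (he : IsAdmissible n k e) {i : ℕ} (hi : 1 ≤ i) (hi' : i ≤ 2*k) :
    rowCount n e i 0 = 0 := by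
  rw [rowCount, card_eq_zero, filter_eq_empty_iff]
  intro j hj
  rw [mem_Icc] at hj
  have := he.mem_range i j hi hi' hj.1 hj.2
  omega

lemma rowCount_succ (n : ℕ) (e : ℕ → ℕ → ℕ) (i m : ℕ) :
    rowCount n e i (m+1) = rowCount n e i m + occ n e i (m+1) := by
  rw [rowCount, rowCount, occ, ← card_union_of_disjoint]
  · congr 1
    ext j
    simp only [mem_filter, mem_union, mem_Icc]
    omega
  · rw [disjoint_filter]
    intro j _ (h : e i j ≤ m) (h' : e i j = m + 1)
    omega

lemma occ_le_one (he : IsAdmissible n k e) {i : ℕ} (t : ℕ) (hi : 1 ≤ i) (hi' : i ≤ 2*k) :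
    occ n e i t ≤ 1 := by
  rw [occ, card_le_one]
  intro j hj j' hj'
  rw [mem_filter] at hj hj'
  exact row_inj he hi hi' hj.1 hj'.1 (hj.2.trans hj'.2.symm)

lemma mem_smallSet_iff (he : IsAdmissible n k e) {i t : ℕ} (hi : 1 ≤ i) (hi' : i ≤ 2*k) :
    t ∈ smallSet n e i ↔ 1 ≤ t ∧ t ≤ 4*n+2 ∧ occ n e i t = 1 := by
  have h1 := occ_le_one he t hi hi'
  have h2 : occ n e i t = 1 ↔ ∃ j ∈ Icc 1 (4*n+2), e i j = t := by
    rw [← filter_nonempty_iff, ← card_pos]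
    change _ ↔ 0 < occ n e i t
    omega
  rw [h2, smallSet, mem_image]
  simp only [mem_filter]
  constructor
  · rintro ⟨j, ⟨hj, hle⟩, rfl⟩
    rw [mem_Icc] at hj
    exact ⟨(he.mem_range i j hi hi' hj.1 hj.2).1, hle, j, mem_Icc.2 hj, rfl⟩
  · rintro ⟨-, hle, j, hj, rfl⟩
    exact ⟨j, ⟨hj, hle⟩, rfl⟩

/-- A row has `4n+2` distinct entries and meets each of the `4n+2` pairs `{t, 8n+5-t}` at most
once, hence exactly once. -/
lemma occ_add_occ (he : IsAdmissible n k e) {i t : ℕ} (hi : 1 ≤ i) (hi' : i ≤ 2*k)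
    (ht : 1 ≤ t) (ht' : t ≤ 4*n+2) : occ n e i t + occ n e i (8*n+5-t) = 1 := by
  let g : ℕ → ℕ := fun j => min (e i j) (8*n+5 - e i j)
  have hmaps : ∀ j ∈ Icc 1 (4*n+2), g j ∈ Icc 1 (4*n+2) := by
    intro j hj
    rw [mem_Icc] at hj
    have := he.mem_range i j hi hi' hj.1 hj.2
    simp only [g, mem_Icc]
    omega
  have hinj : Set.InjOn g (Icc 1 (4*n+2) : Finset ℕ) := by
    intro j hj j' hj' hg
    have hj := mem_coe.1 hj
    have hj' := mem_coe.1 hj'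
    have h1 := mem_Icc.1 hj
    have h2 := mem_Icc.1 hj'
    have h3 := he.mem_range i j hi hi' h1.1 h1.2
    have h4 := he.mem_range i j' hi hi' h2.1 h2.2
    have h5 := he.no_pair i j j' hi hi' h1.1 h1.2 h2.1 h2.2
    refine row_inj he hi hi' hj hj' ?_
    simp only [g] at hg
    omega
  have hsurj := surj_on_of_inj_on_of_card_le (fun j _ => g j) hmaps
    (fun j j' hj hj' h => hinj hj hj' h) le_rfl
  obtain ⟨j, hj, hjt⟩ := hsurj t (mem_Icc.2 ⟨ht, ht'⟩)
  have h1 := mem_Icc.1 hj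
  have h3 := he.mem_range i j hi hi' h1.1 h1.2
  have hle1 := occ_le_one he t hi hi'
  have hle2 := occ_le_one he (8*n+5-t) hi hi'
  have hge : 0 < occ n e i t ∨ 0 < occ n e i (8*n+5-t) := by
    simp only [g] at hjt
    rcases min_choice (e i j) (8*n+5 - e i j) with h | h
    · left
      exact card_pos.2 ⟨j, mem_filter.2 ⟨hj, by omega⟩⟩
    · right
      exact card_pos.2 ⟨j, mem_filter.2 ⟨hj, by omega⟩⟩
  have hnot : ¬ (0 < occ n e i t ∧ 0 < occ n e i (8*n+5-t)) := by
    rintro ⟨ha, hb⟩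
    obtain ⟨a, ha⟩ := card_pos.1 ha
    obtain ⟨b, hb⟩ := card_pos.1 hb
    rw [mem_filter, mem_Icc] at ha hb
    exact he.no_pair i a b hi hi' ha.1.1 ha.1.2 hb.1.1 hb.1.2 (by omega)
  omega

lemma sum_occ_eq_card (n k : ℕ) (e : ℕ → ℕ → ℕ) (t : ℕ) :
    ∑ i ∈ Icc 1 (2*k), occ n e i t =
      #{p ∈ Icc 1 (2*k) ×ˢ Icc 1 (4*n+2) | e p.1 p.2 = t} := by
  simp only [occ, card_filter, sum_product]

lemma sum_occ (he : IsAdmissible n k e) {t : ℕ} (ht : 1 ≤ t) (ht' : t ≤ 4*n+2) :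
    ∑ i ∈ Icc 1 (2*k), occ n e i t = k := by
  have h1 := he.balanced t ht (by omega)
  rw [← sum_occ_eq_card, ← sum_occ_eq_card] at h1
  have h2 : ∑ i ∈ Icc 1 (2*k), (occ n e i t + occ n e i (8*n+5-t)) = 2*k := by
    rw [sum_congr rfl (g := fun _ => 1)]
    · simp
    · intro i hi
      rw [mem_Icc] at hi
      exact occ_add_occ he hi.1 hi.2 ht ht'
  rw [sum_add_distrib] at h2
  omega

lemma sum_rowCount (he : IsAdmissible n k e) {m : ℕ} (hm : m ≤ 4*n+2) :
    ∑ i ∈ Icc 1 (2*k), rowCount n e i m = m*k := by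
  induction m with
  | zero =>
    rw [zero_mul]
    refine sum_eq_zero fun i hi => ?_
    rw [mem_Icc] at hi
    exact rowCount_zero he hi.1 hi.2
  | succ m ih =>
    simp only [rowCount_succ]
    rw [sum_add_distrib, ih (by omega), sum_occ he (by omega) hm]
    ring

lemma even_rowCount (he : IsAdmissible n k e) {i : ℕ} (hi : 1 ≤ i) (hi' : i ≤ 2*k) :
    Even (rowCount n e i (4*n+2)) := by
  have h1 := he.even_big i hi hi'
  have h2 := card_filter_add_card_filter_not (s := Icc 1 (4*n+2)) (fun j => e i j ≤ 4*n+2)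
  simp only [not_le, Nat.card_Icc] at h2
  rw [rowCount]
  rw [Nat.even_iff] at h1 ⊢
  omega

lemma le_rowCount_bnd (he : IsAdmissible n k e) (hsupp : SupportedOnXv6 n k e) {i j : ℕ}
    (hi : 1 ≤ i) (hi' : i ≤ 2*k) (hj : 1 ≤ j) (hj' : j ≤ 4*n+2) :
    j ≤ rowCount n e i (bnd n j) :=
  le_rowCount he hi hi' hj' ((col_le he hi hi' le_rfl hj hj').trans (hsupp j hj hj'))

end Rows

/-! ### Antitone sequences with prescribed sum -/

section Averaging

/-- If `F` is antitone and bounded below by `c` on `{1,…,2k}`, takes no value strictly between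
`c` and `c+s`, and has average `c + s/2`, then `F = c` on the second half: a larger value there
would force `F ≥ c+s` on the whole first half, making the sum too large. -/
lemma eq_min_of_half_lt {k c s : ℕ} {F : ℕ → ℕ}
    (hanti : ∀ i i', 1 ≤ i → i ≤ i' → i' ≤ 2*k → F i' ≤ F i)
    (hge : ∀ i, 1 ≤ i → i ≤ 2*k → c ≤ F i)
    (hgap : ∀ i, 1 ≤ i → i ≤ 2*k → c < F i → c + s ≤ F i)
    (hsum : ∑ i ∈ Icc 1 (2*k), F i = (2*c+s)*k)
    {i : ℕ} (hi : k < i) (hi' : i ≤ 2*k) : F i = c := by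
  by_contra hne
  have hlt : c < F i := lt_of_le_of_ne (hge i (by omega) hi') (Ne.symm hne)
  have hsum' : ∑ j ∈ Icc 1 (2*k), (c + if j ≤ k then s else 0) = (2*c+s)*k := by
    rw [sum_add_distrib, ← sum_filter]
    have : {j ∈ Icc 1 (2*k) | j ≤ k} = Icc 1 k := by
      ext j
      simp only [mem_filter, mem_Icc]
      omega
    rw [this]
    simp
    ring
  have : ∑ j ∈ Icc 1 (2*k), (c + if j ≤ k then s else 0) < ∑ j ∈ Icc 1 (2*k), F j := by
    refine sum_lt_sum (fun j hj => ?_) ⟨i, mem_Icc.2 (by omega), ?_⟩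
    · rw [mem_Icc] at hj
      split_ifs with h
      · have := hanti j i hj.1 (by omega) hi'
        exact hgap j hj.1 hj.2 (by omega)
      · exact hge j hj.1 hj.2
    · rw [if_neg (by omega)]
      exact hlt
  omega

lemma eq_const_of_sum {k c : ℕ} {F : ℕ → ℕ} (hge : ∀ i, 1 ≤ i → i ≤ 2*k → c ≤ F i)
    (hsum : ∑ i ∈ Icc 1 (2*k), F i = 2*c*k) {i : ℕ} (hi : 1 ≤ i) (hi' : i ≤ 2*k) : F i = c := by
  have h : ∑ i ∈ Icc 1 (2*k), c = ∑ i ∈ Icc 1 (2*k), F i := by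
    rw [hsum]
    simp
    ring
  rw [sum_eq_sum_iff_of_le (fun j hj => hge j (mem_Icc.1 hj).1 (mem_Icc.1 hj).2)] at h
  exact (h i (mem_Icc.2 ⟨hi, hi'⟩)).symm

/-- An antitone `0`-`1` sequence on `{1,…,2k}` with sum `k` is the indicator of `{1,…,k}`. -/
lemma eq_indicator {k : ℕ} {F : ℕ → ℕ}
    (hanti : ∀ i i', 1 ≤ i → i ≤ i' → i' ≤ 2*k → F i' ≤ F i)
    (hle : ∀ i, 1 ≤ i → i ≤ 2*k → F i ≤ 1)
    (hsum : ∑ i ∈ Icc 1 (2*k), F i = k) {i : ℕ} (hi : 1 ≤ i) (hi' : i ≤ 2*k) :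
    F i = if i ≤ k then 1 else 0 := by
  have hlow : ∀ j, k < j → j ≤ 2*k → F j = 0 := fun j hj hj' =>
    eq_min_of_half_lt (c := 0) (s := 1) hanti (by simp) (fun _ _ _ h => by omega)
      (by simpa using hsum) hj hj'
  by_cases h : i ≤ k
  · rw [if_pos h]
    have hs : ∑ i ∈ Icc 1 (2*k), F i = ∑ i ∈ Icc 1 k, F i := by
      symm
      refine sum_subset (Icc_subset_Icc le_rfl (by omega)) fun j hj hj' => ?_
      simp only [mem_Icc] at hj hj'
      exact hlow j (by omega) hj.2
    have h2 : ∑ i ∈ Icc 1 k, F i = ∑ i ∈ Icc 1 k, 1 := by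
      rw [← hs, hsum]
      simp
    rw [sum_eq_sum_iff_of_le] at h2
    · exact h2 i (mem_Icc.2 ⟨hi, h⟩)
    · intro j hj
      rw [mem_Icc] at hj
      exact hle j hj.1 (by omega)
  · rw [if_neg h]
    exact hlow i (by omega) hi'

end Averaging

/-! ### Row codes -/

section Codes

/-- The code of row `i`: bit `q` (for `0 ≤ q ≤ 5`) records whether `4n-3+q` occurs in the row. -/
def rowCode (n : ℕ) (e : ℕ → ℕ → ℕ) (i : ℕ) : ℕ :=
  occ n e i (4*n-3) + 2 * occ n e i (4*n-2) + 4 * occ n e i (4*n-1) + 8 * occ n e i (4*n) +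
    16 * occ n e i (4*n+1) + 32 * occ n e i (4*n+2)

/-- Bit `q` of the code `v`. -/
def codeBit (v q : ℕ) : ℕ := v / 2^q % 2

/-- The number of bits of index `≤ m` that are set in the code `v`. -/
def codeCount (v m : ℕ) : ℕ := ∑ q ∈ range (m+1), codeBit v q

/-- The codes with bit `0` set and an even number of bits. -/
def upperCodes : Finset ℕ := {3, 5, 9, 17, 33, 15, 23, 39, 27, 43, 51, 29, 45, 53, 57, 63}

/-- The codes with two bits, one of index `1` or `2` and one of index `3`, `4` or `5`. -/
def lowerCodes : Finset ℕ := {10, 18, 34, 12, 20, 36}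

/-- Two codes are comparable if their prefix bit counts are. The codes of two rows of a tableau
are always comparable. -/
def CodeComparable (v w : ℕ) : Prop :=
  (∀ m < 6, codeCount v m ≤ codeCount w m) ∨ (∀ m < 6, codeCount w m ≤ codeCount v m)

instance (v w : ℕ) : Decidable (CodeComparable v w) := by
  unfold CodeComparable
  infer_instance

/-- Add `t` to `s` if the bit `b` is `1`. -/
def insertBit (b t : ℕ) (s : Finset ℕ) : Finset ℕ := if b = 1 then insert t s else s

/-- The small set of a row with code `v`. -/
def codeSet (n v : ℕ) : Finset ℕ :=
  (if codeBit v 0 = 1 then setA n else setB n) ∪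
    insertBit (codeBit v 1) (4*n-2) (insertBit (codeBit v 2) (4*n-1) (insertBit (codeBit v 3) (4*n)
      (insertBit (codeBit v 4) (4*n+1) (insertBit (codeBit v 5) (4*n+2) ∅))))

lemma mem_insertBit {b t x : ℕ} {s : Finset ℕ} :
    x ∈ insertBit b t s ↔ (b = 1 ∧ x = t) ∨ x ∈ s := by
  unfold insertBit
  split_ifs with h <;> simp [h]

variable {n k : ℕ} {e : ℕ → ℕ → ℕ}

lemma codeBit_rowCode (he : IsAdmissible n k e) {i : ℕ} (hi : 1 ≤ i) (hi' : i ≤ 2*k) :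
    codeBit (rowCode n e i) 0 = occ n e i (4*n-3) ∧ codeBit (rowCode n e i) 1 = occ n e i (4*n-2) ∧
    codeBit (rowCode n e i) 2 = occ n e i (4*n-1) ∧ codeBit (rowCode n e i) 3 = occ n e i (4*n) ∧
    codeBit (rowCode n e i) 4 = occ n e i (4*n+1) ∧
    codeBit (rowCode n e i) 5 = occ n e i (4*n+2) := by
  have h0 := occ_le_one he (4*n-3) hi hi'
  have h1 := occ_le_one he (4*n-2) hi hi'
  have h2 := occ_le_one he (4*n-1) hi hi'
  have h3 := occ_le_one he (4*n) hi hi'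
  have h4 := occ_le_one he (4*n+1) hi hi'
  have h5 := occ_le_one he (4*n+2) hi hi'
  simp only [codeBit, rowCode]
  norm_num only
  omega

lemma rowCode_lt (he : IsAdmissible n k e) {i : ℕ} (hi : 1 ≤ i) (hi' : i ≤ 2*k) :
    rowCode n e i < 64 := by
  have h0 := occ_le_one he (4*n-3) hi hi'
  have h1 := occ_le_one he (4*n-2) hi hi'
  have h2 := occ_le_one he (4*n-1) hi hi'
  have h3 := occ_le_one he (4*n) hi hi'
  have h4 := occ_le_one he (4*n+1) hi hi'
  have h5 := occ_le_one he (4*n+2) hi hi'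
  simp only [rowCode]
  omega

lemma rowCount_two_mul (he : IsAdmissible n k e) (hsupp : SupportedOnXv6 n k e) {i j : ℕ}
    (hi : 1 ≤ i) (hi' : i ≤ 2*k) (hj : j ≤ 2*n-2) : rowCount n e i (2*j) = j := by
  refine eq_const_of_sum (F := fun i => rowCount n e i (2*j)) (fun i hi hi' => ?_)
    (sum_rowCount he (by omega)) hi hi'
  rcases Nat.eq_zero_or_pos j with rfl | hj0
  · simp
  · have := le_rowCount_bnd he hsupp hi hi' hj0 (by omega)
    rwa [bnd, if_pos hj] at this

/-- Odd values `≤ 4n-3` occur exactly in the first `k` rows. -/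
lemma occ_odd (hn : 1 ≤ n) (he : IsAdmissible n k e) (hsupp : SupportedOnXv6 n k e) {i j : ℕ}
    (hi : 1 ≤ i) (hi' : i ≤ 2*k) (hj : j ≤ 2*n-2) :
    occ n e i (2*j+1) = if i ≤ k then 1 else 0 := by
  refine eq_indicator (F := fun i => occ n e i (2*j+1)) (fun i i' h1 h2 h3 => ?_)
    (fun i h1 h2 => occ_le_one he _ h1 h2) (sum_occ he (by omega) (by omega)) hi hi'
  have h4 := rowCount_two_mul he hsupp h1 (by omega) hj
  have h5 := rowCount_two_mul he hsupp (by omega) h3 hj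
  have h6 := rowCount_succ n e i (2*j)
  have h7 := rowCount_succ n e i' (2*j)
  have h8 := rowCount_anti he (2*j+1) h1 h2 h3
  omega

/-- Even values `≤ 4n-4` occur exactly in the last `k` rows. -/
lemma occ_even (hn : 1 ≤ n) (he : IsAdmissible n k e) (hsupp : SupportedOnXv6 n k e) {i j : ℕ}
    (hi : 1 ≤ i) (hi' : i ≤ 2*k) (hj : j + 1 ≤ 2*n-2) :
    occ n e i (2*j+2) = if i ≤ k then 0 else 1 := by
  have h1 := rowCount_two_mul he hsupp hi hi' hj
  have h2 := rowCount_two_mul he hsupp hi hi' (j := j) (by omega)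
  have h3 := rowCount_succ n e i (2*j)
  have h4 := rowCount_succ n e i (2*j+1)
  have h5 := occ_odd hn he hsupp hi hi' (j := j) (by omega)
  rw [show 2*(j+1) = 2*j+1+1 by ring] at h1
  rw [show 2*j+2 = 2*j+1+1 by ring]
  split_ifs at h5 ⊢ <;> omega

lemma occ_base (hn : 1 ≤ n) (he : IsAdmissible n k e) (hsupp : SupportedOnXv6 n k e) {i : ℕ}
    (hi : 1 ≤ i) (hi' : i ≤ 2*k) : occ n e i (4*n-3) = if i ≤ k then 1 else 0 := by
  have := occ_odd hn he hsupp hi hi' (j := 2*n-2) le_rfl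
  rwa [show 2*(2*n-2)+1 = 4*n-3 by omega] at this

lemma smallSet_eq_codeSet (hn : 1 ≤ n) (he : IsAdmissible n k e) (hsupp : SupportedOnXv6 n k e)
    {i : ℕ} (hi : 1 ≤ i) (hi' : i ≤ 2*k) : smallSet n e i = codeSet n (rowCode n e i) := by
  obtain ⟨h0, h1, h2, h3, h4, h5⟩ := codeBit_rowCode he hi hi'
  have hb := occ_base hn he hsupp hi hi'
  ext t
  rw [mem_smallSet_iff he hi hi', codeSet, h0, h1, h2, h3, h4, h5, mem_union]
  simp only [mem_insertBit, notMem_empty, or_false]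
  have hbase : t ∈ (if occ n e i (4*n-3) = 1 then setA n else setB n) ↔
      1 ≤ t ∧ t ≤ 4*n-3 ∧ occ n e i t = 1 := by
    obtain ⟨j, rfl | rfl⟩ : ∃ j, t = 2*j+1 ∨ t = 2*j :=
      ⟨t/2, by omega⟩
    · by_cases hj : j ≤ 2*n-2
      · rw [hb, occ_odd hn he hsupp hi hi' hj]
        by_cases hik : i ≤ k <;> simp [hik, setA, setB]
      · split_ifs <;> simp [setA, setB] <;> omega
    · rcases j with _ | j
      · split_ifs <;> simp [setA, setB]
      by_cases hj : j + 1 ≤ 2*n-2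
      · rw [hb, show 2*(j+1) = 2*j+2 by ring, occ_even hn he hsupp hi hi' hj]
        by_cases hik : i ≤ k <;> simp [hik, setA, setB]
        omega
      · split_ifs <;> simp [setA, setB] <;> omega
  rw [hbase]
  by_cases ht : t ≤ 4*n-3
  · constructor
    · rintro ⟨a, b, c⟩
      exact Or.inl ⟨a, ht, c⟩
    · rintro (⟨a, b, c⟩ | h)
      · exact ⟨a, by omega, c⟩
      · omega
  · constructor
    · rintro ⟨a, b, c⟩
      right
      have : t = 4*n-2 ∨ t = 4*n-1 ∨ t = 4*n ∨ t = 4*n+1 ∨ t = 4*n+2 := by omega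
      rcases this with rfl | rfl | rfl | rfl | rfl <;> simp [c]
    · rintro (h | ⟨h, rfl⟩ | ⟨h, rfl⟩ | ⟨h, rfl⟩ | ⟨h, rfl⟩ | ⟨h, rfl⟩)
      · omega
      all_goals exact ⟨by omega, by omega, h⟩

/-- Since every row has exactly `2n-2` entries `≤ 4n-4`, prefix bit counts of the code are shifted
values of `rowCount`. -/
lemma codeCount_rowCode (hn : 1 ≤ n) (he : IsAdmissible n k e) (hsupp : SupportedOnXv6 n k e)
    {i m : ℕ} (hi : 1 ≤ i) (hi' : i ≤ 2*k) (hm : m < 6) :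
    rowCount n e i (4*n-3+m) = 2*n-2 + codeCount (rowCode n e i) m := by
  obtain ⟨h0, h1, h2, h3, h4, h5⟩ := codeBit_rowCode he hi hi'
  have c := rowCount_two_mul he hsupp hi hi' (j := 2*n-2) le_rfl
  have c0 := rowCount_succ n e i (2*(2*n-2))
  rw [show 2*(2*n-2)+1 = 4*n-3+0 by omega] at c0
  have c1 := rowCount_succ n e i (4*n-3+0)
  have c2 := rowCount_succ n e i (4*n-3+1)
  have c3 := rowCount_succ n e i (4*n-3+2)
  have c4 := rowCount_succ n e i (4*n-3+3)
  have c5 := rowCount_succ n e i (4*n-3+4)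
  rw [show 4*n-3 = 4*n-3+0 by omega] at h0
  rw [show 4*n-2 = 4*n-3+1 by omega] at h1
  rw [show 4*n-1 = 4*n-3+2 by omega] at h2
  rw [show 4*n = 4*n-3+3 by omega] at h3
  rw [show 4*n+1 = 4*n-3+4 by omega] at h4
  rw [show 4*n+2 = 4*n-3+5 by omega] at h5
  simp only [add_assoc, Nat.reduceAdd] at c0 c1 c2 c3 c4 c5
  interval_cases m <;> simp only [codeCount, sum_range_succ, range_zero, sum_empty] <;> omega

lemma rowCode_comparable (hn : 1 ≤ n) (he : IsAdmissible n k e) (hsupp : SupportedOnXv6 n k e)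
    {i i' : ℕ} (hi : 1 ≤ i) (hi2 : i ≤ 2*k) (hi' : 1 ≤ i') (hi2' : i' ≤ 2*k) :
    CodeComparable (rowCode n e i) (rowCode n e i') := by
  have key : ∀ {i i'}, 1 ≤ i → i ≤ i' → i' ≤ 2*k → ∀ m < 6,
      codeCount (rowCode n e i') m ≤ codeCount (rowCode n e i) m := by
    intro i i' h1 h2 h3 m hm
    have h4 := codeCount_rowCode hn he hsupp h1 (by omega) hm
    have h5 := codeCount_rowCode hn he hsupp (by omega) h3 hm
    have h6 := rowCount_anti he (4*n-3+m) h1 h2 h3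
    omega
  rcases le_total i i' with h | h
  · exact Or.inr (key hi h hi2')
  · exact Or.inl (key hi' h hi2)

lemma rowCode_mem (hn : 1 ≤ n) (he : IsAdmissible n k e) (hsupp : SupportedOnXv6 n k e)
    {i : ℕ} (hi : 1 ≤ i) (hi' : i ≤ 2*k) : rowCode n e i ∈ upperCodes ∪ lowerCodes := by
  have hc : ∀ {m i}, 1 ≤ i → i ≤ 2*k → m < 6 →
      rowCount n e i (4*n-3+m) = 2*n-2 + codeCount (rowCode n e i) m :=
    fun h1 h2 h3 => codeCount_rowCode hn he hsupp h1 h2 h3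
  have hlt := rowCode_lt he hi hi'
  have heven : ∀ {i}, 1 ≤ i → i ≤ 2*k → codeCount (rowCode n e i) 5 % 2 = 0 := by
    intro i hi hi'
    have h1 := even_rowCount he hi hi'
    have h2 := hc hi hi' (m := 5) (by norm_num)
    rw [Nat.even_iff] at h1
    rw [show 4*n-3+5 = 4*n+2 by omega] at h2
    omega
  have hanti : ∀ m < 6, ∀ i i', 1 ≤ i → i ≤ i' → i' ≤ 2*k →
      codeCount (rowCode n e i') m ≤ codeCount (rowCode n e i) m := by
    intro m hm i i' h1 h2 h3
    have h4 := hc h1 (h2.trans h3) hm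
    have h5 := hc (h1.trans h2) h3 hm
    have h6 := rowCount_anti he (4*n-3+m) h1 h2 h3
    omega
  have hsum : ∀ m < 6, ∑ i ∈ Icc 1 (2*k), codeCount (rowCode n e i) m = (m+1)*k := by
    intro m hm
    have h1 := sum_rowCount he (m := 4*n-3+m) (by omega)
    rw [sum_congr rfl (fun i hi => hc (mem_Icc.1 hi).1 (mem_Icc.1 hi).2 hm), sum_add_distrib] at h1
    simp only [sum_const, Nat.card_Icc, smul_eq_mul] at h1
    obtain ⟨n, rfl⟩ : ∃ n', n = n'+1 := ⟨n-1, by omega⟩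
    rw [show 4*(n+1)-3+m = 4*n + (m+1) by omega, show 2*(n+1)-2 = 2*n by omega,
      show 2*k+1-1 = 2*k by omega] at h1
    have h2 : (4*n+(m+1))*k = 2*k*(2*n) + (m+1)*k := by ring
    omega
  have h0 := occ_base hn he hsupp hi hi'
  rw [← (codeBit_rowCode he hi hi').1] at h0
  have hb : codeCount (rowCode n e i) 0 = codeBit (rowCode n e i) 0 := by
    simp [codeCount]
  rw [mem_union]
  by_cases hik : i ≤ k
  · left
    rw [if_pos hik, ← hb] at h0
    have key : ∀ v < 64, codeCount v 0 = 1 → codeCount v 5 % 2 = 0 → v ∈ upperCodes := by decide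
    exact key _ hlt h0 (heven hi hi')
  · right
    rw [if_neg hik, ← hb] at h0
    have h2 : codeCount (rowCode n e i) 2 = 1 := by
      refine eq_min_of_half_lt (c := 1) (s := 1) (F := fun i => codeCount (rowCode n e i) 2)
        (hanti 2 (by norm_num)) (fun i hi hi' => ?_) (fun _ _ _ h => h) (hsum 2 (by norm_num))
        (by omega) hi'
      have h1 := le_rowCount_bnd he hsupp hi hi' (j := 2*n-1) (by omega) (by omega)
      have h2 := hc hi hi' (m := 2) (by norm_num)
      rw [bnd, if_neg (by omega), if_pos rfl, show 4*n-1 = 4*n-3+2 by omega] at h1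
      omega
    have h5 : codeCount (rowCode n e i) 5 = 2 := by
      refine eq_min_of_half_lt (c := 2) (s := 2) (F := fun i => codeCount (rowCode n e i) 5)
        (hanti 5 (by norm_num)) (fun i hi hi' => ?_) (fun i hi hi' h => ?_)
        (hsum 5 (by norm_num)) (by omega) hi'
      · have h1 := le_rowCount_bnd he hsupp hi hi' (j := 2*n) (by omega) (by omega)
        have h2 := hc hi hi' (m := 5) (by norm_num)
        rw [bnd, if_neg (by omega), if_neg (by omega), if_pos rfl,
          show 4*n+2 = 4*n-3+5 by omega] at h1
        omega
      · have := heven hi hi'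
        omega
    have key : ∀ v < 64, codeCount v 0 = 0 → codeCount v 2 = 1 → codeCount v 5 = 2 →
        v ∈ lowerCodes := by decide
    exact key _ hlt h0 h2 h5

end Codes

/-! ### The linear system for the multiplicities -/

section Core

set_option linter.unusedSimpArgs false in
set_option maxHeartbeats 4000000 in
/-- The linear core. The digit `d ∈ {2,…,6}` stands for the value `4n-4+d`. The variables are
multiplicities of row types: `yᵢⱼ` counts lower rows (those containing `B`) with the extra values
`i, j`; among the upper rows (those containing `A`), `aᵢⱼₗ` counts those with extra values
`i, j, l`, `p` those with all five, and `q` those with only `4`. The hypotheses `hy`, `hx` say that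
there are `k` lower and `k` upper rows, and `h2`, …, `h6` that each value occurs `k` times;
`l1`, …, `u3` exclude incomparable pairs, and the rest say that each of the twelve targets is
missing a row. The zero patterns of the `y`s and of a few other variables are enumerated; the
linear system is infeasible in each case. -/
lemma core (k y24 y25 y26 y34 y35 y36 p q a234 a235 a236 a245 a246 a256 a345 a346 a356 a456 : ℕ)
    (hk : 1 ≤ k)
    (hy : y24 + y25 + y26 + y34 + y35 + y36 = k)
    (hx : p + q + a234 + a235 + a236 + a245 + a246 + a256 + a345 + a346 + a356 + a456 = k)
    (h2 : p + a234 + a235 + a236 + a245 + a246 + a256 + y24 + y25 + y26 = k)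
    (h3 : p + a234 + a235 + a236 + a345 + a346 + a356 + y34 + y35 + y36 = k)
    (h4 : p + q + a234 + a245 + a246 + a345 + a346 + a456 + y24 + y34 = k)
    (h5 : p + a235 + a245 + a256 + a345 + a356 + a456 + y25 + y35 = k)
    (h6 : p + a236 + a246 + a256 + a346 + a356 + a456 + y26 + y36 = k)
    (l1 : y26 = 0 ∨ y34 = 0 ∧ y35 = 0) (l2 : y25 = 0 ∨ y34 = 0)
    (u1 : a236 = 0 ∨ a245 = 0 ∧ a345 = 0) (u2 : a345 = 0 ∨ a246 = 0 ∧ a256 = 0)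
    (u3 : a256 = 0 ∨ a346 = 0)
    (x1 : a356 = 0 ∨ y24 = 0) (x2 : a256 = 0 ∨ y34 = 0) (x3 : a346 = 0 ∨ y25 = 0)
    (x4 : a246 = 0 ∨ y35 = 0) (x5 : a345 = 0 ∨ y26 = 0) (x6 : a245 = 0 ∨ y36 = 0)
    (z1 : a236 = 0 ∨ a456 = 0 ∨ y24 = 0 ∨ y35 = 0)
    (z2 : a235 = 0 ∨ a456 = 0 ∨ y24 = 0 ∨ y36 = 0)
    (z3 : p = 0 ∨ q = 0 ∨ y25 = 0 ∨ y36 = 0)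
    (z4 : a234 = 0 ∨ a456 = 0 ∨ y25 = 0 ∨ y36 = 0)
    (w1 : a234 = 0 ∨ a256 = 0 ∨ a456 = 0 ∨ y24 = 0 ∨ y35 = 0 ∨ y36 = 0)
    (w2 : p = 0 ∨ a256 = 0 ∨ q = 0 ∨ y24 = 0 ∨ y35 = 0 ∨ y36 = 0) : False := by
  have cl : ∀ y : ℕ, y = 0 ∨ (0 < y ∧ ¬ y = 0) := fun y => by omega
  rcases cl y24 with h24 | ⟨g24, h24⟩ <;> rcases cl y25 with h25 | ⟨g25, h25⟩ <;>
    rcases cl y26 with h26 | ⟨g26, h26⟩ <;> rcases cl y34 with h34 | ⟨g34, h34⟩ <;>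
    rcases cl y35 with h35 | ⟨g35, h35⟩ <;> rcases cl y36 with h36 | ⟨g36, h36⟩ <;>
    simp only [h24, h25, h26, h34, h35, h36, or_true, or_false, and_true, and_false]
      at l1 l2 x1 x2 x3 x4 x5 x6 z1 z2 z3 z4 w1 w2 <;> try linarith
  all_goals (
    rcases cl a256 with h | ⟨g, h⟩ <;>
    (try simp only [h, true_or, false_or, or_false, or_true, and_true, true_and, and_false,
      false_and] at u1 u2 u3 z1 z2 z3 z4 w1 w2) <;> try linarith)
  all_goals (
    rcases cl p with h | ⟨g, h⟩ <;>
    (try simp only [h, true_or, false_or, or_false, or_true, and_true, true_and, and_false,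
      false_and] at u1 u2 u3 z1 z2 z3 z4 w1 w2) <;> try linarith)
  all_goals (
    rcases cl a234 with h | ⟨g, h⟩ <;>
    (try simp only [h, true_or, false_or, or_false, or_true, and_true, true_and, and_false,
      false_and] at u1 u2 u3 z1 z2 z3 z4 w1 w2) <;> try linarith)
  all_goals (
    rcases cl a235 with h | ⟨g, h⟩ <;>
    (try simp only [h, true_or, false_or, or_false, or_true, and_true, true_and, and_false,
      false_and] at u1 u2 u3 z1 z2 z3 z4 w1 w2) <;> try linarith)
  all_goals (
    rcases cl a236 with h | ⟨g, h⟩ <;>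
    (try simp only [h, true_or, false_or, or_false, or_true, and_true, true_and, and_false,
      false_and] at u1 u2 u3 z1 z2 z3 z4 w1 w2) <;> try linarith)
  all_goals (
    rcases cl a345 with h | ⟨g, h⟩ <;>
    (try simp only [h, true_or, false_or, or_false, or_true, and_true, true_and, and_false,
      false_and] at u1 u2 u3 z1 z2 z3 z4 w1 w2) <;> try linarith)

end Core

/-! ### From multiplicities to rows -/

section Assembly

/-- The twelve multisets `X₁,…,X₆, Y₁,…,Y₄, Z₁, Z₂`, as lists of row codes. -/
def targetCodes : List (List ℕ) :=
  [[53, 10], [51, 12], [45, 18], [43, 20], [29, 34], [27, 36],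
    [39, 57, 10, 20], [23, 57, 10, 36], [63, 9, 18, 36], [15, 57, 18, 36],
    [15, 51, 57, 10, 20, 36], [63, 51, 9, 10, 20, 36]]

set_option maxHeartbeats 4000000 in
/-- The form of `core` used for tableaux. Here `x v` is the multiplicity of the code `v` among the
rows; some target list has all its codes occurring. -/
lemma exists_target {k : ℕ} (hk : 1 ≤ k) (x : ℕ → ℕ)
    (hcard : ∑ v ∈ upperCodes ∪ lowerCodes, x v = 2*k)
    (hbit : ∀ q < 6, ∑ v ∈ upperCodes ∪ lowerCodes, x v * codeBit v q = k)
    (hcmp : ∀ v w, 0 < x v → 0 < x w → CodeComparable v w) :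
    ∃ T ∈ targetCodes, ∀ v ∈ T, 0 < x v := by
  have hcodes : upperCodes ∪ lowerCodes = {3, 5, 9, 17, 33, 15, 23, 39, 27, 43, 51, 29, 45, 53, 57,
      63, 10, 18, 34, 12, 20, 36} := by decide
  rw [hcodes] at hcard hbit
  have b0 := hbit 0 (by norm_num)
  have b1 := hbit 1 (by norm_num)
  have b2 := hbit 2 (by norm_num)
  have b3 := hbit 3 (by norm_num)
  have b4 := hbit 4 (by norm_num)
  have b5 := hbit 5 (by norm_num)
  simp only [sum_insert, mem_insert, mem_singleton, sum_singleton, Nat.reduceEqDiff, or_self,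
    not_false_eq_true, codeBit, Nat.reducePow, Nat.reduceDiv, Nat.reduceMod, mul_zero, mul_one,
    add_zero, zero_add] at hcard b0 b1 b2 b3 b4 b5
  have hinc : ∀ v w, ¬ CodeComparable v w → x v = 0 ∨ x w = 0 := by
    intro v w h
    by_contra! hne
    exact h (hcmp v w (Nat.pos_of_ne_zero hne.1) (Nat.pos_of_ne_zero hne.2))
  -- The codes `3, 5, 17, 33` of upper rows with a single value in `4n-2,…,4n+2` other than `4n`
  -- do not occur.
  have z3 : x 3 = 0 := by
    by_contra h0
    have := Nat.pos_of_ne_zero h0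
    rcases hinc 3 57 (by decide) with h | h <;> linarith
  have z5 : x 5 = 0 := by
    by_contra h0
    have := Nat.pos_of_ne_zero h0
    rcases hinc 5 57 (by decide) with h | h <;> linarith
  have z17 : x 17 = 0 := by
    by_contra h0
    have := Nat.pos_of_ne_zero h0
    rcases hinc 17 10 (by decide) with h | h <;> rcases hinc 17 12 (by decide) with h' | h' <;>
      linarith
  have z33 : x 33 = 0 := by
    by_contra h0
    have := Nat.pos_of_ne_zero h0
    rcases hinc 33 10 (by decide) with h | h <;> rcases hinc 33 12 (by decide) with h' | h' <;>
      linarith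
  simp only [z3, z5, z17, z33, zero_add] at hcard b0 b1 b2 b3 b4 b5
  have l1 := hinc 34 12 (by decide)
  have l1' := hinc 34 20 (by decide)
  have l2 := hinc 18 12 (by decide)
  have u1 := hinc 39 27 (by decide)
  have u1' := hinc 39 29 (by decide)
  have u2 := hinc 29 43 (by decide)
  have u2' := hinc 29 51 (by decide)
  have u3 := hinc 51 45 (by decide)
  by_contra hno
  simp only [targetCodes, List.mem_cons, List.not_mem_nil, or_false, exists_eq_or_imp,
    exists_eq_left, forall_eq_or_imp, forall_eq, not_or, not_and_or, Nat.pos_iff_ne_zero,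
    not_not] at hno
  obtain ⟨x1, x2, x3, x4, x5, x6, y1, y2, y3, y4, w1, w2⟩ := hno
  exact core k (x 10) (x 18) (x 34) (x 12) (x 20) (x 36) (x 63) (x 9) (x 15) (x 23) (x 39) (x 27)
    (x 43) (x 51) (x 29) (x 45) (x 53) (x 57) hk (by linarith) (by linarith)
    (by linarith) (by linarith) (by linarith) (by linarith) (by linarith)
    (or_and_left.2 ⟨l1, l1'⟩) l2 (or_and_left.2 ⟨u1, u1'⟩)
    (or_and_left.2 ⟨u2, u2'⟩) u3 x1 x2 x3 x4 x5 x6 y1 y2 y3 y4 w1 w2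

variable {n k : ℕ} {e : ℕ → ℕ → ℕ}

/-- Choosing one row for each code of the target list given by `exists_target`. The codes in a
target list are distinct, so the rows are. -/
lemma exists_target_rows (hn : 1 ≤ n) (hk : 1 ≤ k) (he : IsAdmissible n k e)
    (hsupp : SupportedOnXv6 n k e) :
    ∃ l : List ℕ, l.Nodup ∧ (∀ i ∈ l, 1 ≤ i ∧ i ≤ 2*k) ∧
      ∃ T ∈ targetCodes, l.length = T.length ∧ l.map (smallSet n e) = T.map (codeSet n) := by
  have hmem : ∀ i ∈ Icc 1 (2*k), rowCode n e i ∈ upperCodes ∪ lowerCodes := fun i hi =>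
    rowCode_mem hn he hsupp (mem_Icc.1 hi).1 (mem_Icc.1 hi).2
  have hrow : ∀ v, 0 < #{i ∈ Icc 1 (2*k) | rowCode n e i = v} →
      ∃ i, (1 ≤ i ∧ i ≤ 2*k) ∧ rowCode n e i = v := by
    intro v hv
    obtain ⟨i, hi⟩ := card_pos.1 hv
    rw [mem_filter, mem_Icc] at hi
    exact ⟨i, hi⟩
  have hcard : ∑ v ∈ upperCodes ∪ lowerCodes, #{i ∈ Icc 1 (2*k) | rowCode n e i = v} = 2*k := by
    rw [← card_eq_sum_card_fiberwise hmem]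
    simp
  have hbit : ∀ q < 6, ∑ v ∈ upperCodes ∪ lowerCodes,
      #{i ∈ Icc 1 (2*k) | rowCode n e i = v} * codeBit v q = k := by
    intro q hq
    have h1 : ∑ i ∈ Icc 1 (2*k), codeBit (rowCode n e i) q = k := by
      refine Eq.trans (sum_congr rfl fun i hi => ?_)
        (sum_occ he (t := 4*n-3+q) (by omega) (by omega))
      rw [mem_Icc] at hi
      obtain ⟨h0, h1, h2, h3, h4, h5⟩ := codeBit_rowCode he hi.1 hi.2
      interval_cases q
      · rw [h0, show 4*n-3+0 = 4*n-3 by omega]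
      · rw [h1, show 4*n-3+1 = 4*n-2 by omega]
      · rw [h2, show 4*n-3+2 = 4*n-1 by omega]
      · rw [h3, show 4*n-3+3 = 4*n by omega]
      · rw [h4, show 4*n-3+4 = 4*n+1 by omega]
      · rw [h5, show 4*n-3+5 = 4*n+2 by omega]
    rw [← sum_fiberwise_of_maps_to hmem] at h1
    refine Eq.trans (sum_congr rfl fun v _ => ?_) h1
    rw [← smul_eq_mul, ← sum_const]
    refine sum_congr rfl fun i hi => ?_
    rw [(mem_filter.1 hi).2]
  have hcmp : ∀ v w, 0 < #{i ∈ Icc 1 (2*k) | rowCode n e i = v} →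
      0 < #{i ∈ Icc 1 (2*k) | rowCode n e i = w} → CodeComparable v w := by
    intro v w hv hw
    obtain ⟨i, hi, rfl⟩ := hrow v hv
    obtain ⟨i', hi', rfl⟩ := hrow w hw
    exact rowCode_comparable hn he hsupp hi.1 hi.2 hi'.1 hi'.2
  obtain ⟨T, hT, hpos⟩ :=
    exists_target hk (fun v => #{i ∈ Icc 1 (2*k) | rowCode n e i = v}) hcard hbit hcmp
  have hex : ∀ v, ∃ i, v ∈ T → (1 ≤ i ∧ i ≤ 2*k) ∧ rowCode n e i = v := by
    intro v
    by_cases hv : v ∈ T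
    · obtain ⟨i, hi⟩ := hrow v (hpos v hv)
      exact ⟨i, fun _ => hi⟩
    · exact ⟨0, fun h => absurd h hv⟩
  choose r hr using hex
  have hTn : T.Nodup := by
    have : ∀ T ∈ targetCodes, T.Nodup := by decide
    exact this T hT
  refine ⟨T.map r, ?_, ?_, T, hT, by simp, ?_⟩
  · refine hTn.map_on fun v hv w hw h => ?_
    rw [← (hr v hv).2, ← (hr w hw).2, h]
  · intro i hi
    obtain ⟨v, hv, rfl⟩ := List.mem_map.1 hi
    exact (hr v hv).1
  · rw [List.map_map]
    refine List.map_congr_left fun v hv => ?_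
    have := hr v hv
    rw [Function.comp_apply, smallSet_eq_codeSet hn he hsupp this.1.1 this.1.2, this.2]

end Assembly

end Helper

/-- combinatorial core of Lemma 3.1: some `2`, `4` or `6`
pairwise distinct rows of an admissible tableau supported on `X(v₆)` have small
sets forming one of the twelve multisets `X₁,…,X₆, Y₁,…,Y₄, Z₁, Z₂`. -/
theorem stmt_12 (n k : ℕ) (hn : 1 ≤ n) (hk : 1 ≤ k) (e : ℕ → ℕ → ℕ)
    (he : IsAdmissible n k e) (hsupp : SupportedOnXv6 n k e) :
    ∃ l : List ℕ, l.Nodup ∧ (∀ i ∈ l, 1 ≤ i ∧ i ≤ 2*k) ∧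
      (l.length = 2 ∨ l.length = 4 ∨ l.length = 6) ∧
      ((↑(l.map (smallSet n e)) : Multiset (Finset ℕ)) =
          ({setA n ∪ {4*n-1, 4*n+1, 4*n+2},
            setB n ∪ {4*n-2, 4*n}} : Multiset (Finset ℕ)) ∨  -- X₁
       (↑(l.map (smallSet n e)) : Multiset (Finset ℕ)) =
          ({setA n ∪ {4*n-2, 4*n+1, 4*n+2},
            setB n ∪ {4*n-1, 4*n}} : Multiset (Finset ℕ)) ∨  -- X₂
       (↑(l.map (smallSet n e)) : Multiset (Finset ℕ)) =
          ({setA n ∪ {4*n-1, 4*n, 4*n+2},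
            setB n ∪ {4*n-2, 4*n+1}} : Multiset (Finset ℕ)) ∨  -- X₃
       (↑(l.map (smallSet n e)) : Multiset (Finset ℕ)) =
          ({setA n ∪ {4*n-2, 4*n, 4*n+2},
            setB n ∪ {4*n-1, 4*n+1}} : Multiset (Finset ℕ)) ∨  -- X₄
       (↑(l.map (smallSet n e)) : Multiset (Finset ℕ)) =
          ({setA n ∪ {4*n-1, 4*n, 4*n+1},
            setB n ∪ {4*n-2, 4*n+2}} : Multiset (Finset ℕ)) ∨  -- X₅
       (↑(l.map (smallSet n e)) : Multiset (Finset ℕ)) =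
          ({setA n ∪ {4*n-2, 4*n, 4*n+1},
            setB n ∪ {4*n-1, 4*n+2}} : Multiset (Finset ℕ)) ∨  -- X₆
       (↑(l.map (smallSet n e)) : Multiset (Finset ℕ)) =
          ({setA n ∪ {4*n-2, 4*n-1, 4*n+2},
            setA n ∪ {4*n, 4*n+1, 4*n+2},
            setB n ∪ {4*n-2, 4*n},
            setB n ∪ {4*n-1, 4*n+1}} : Multiset (Finset ℕ)) ∨  -- Y₁
       (↑(l.map (smallSet n e)) : Multiset (Finset ℕ)) =
          ({setA n ∪ {4*n-2, 4*n-1, 4*n+1},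
            setA n ∪ {4*n, 4*n+1, 4*n+2},
            setB n ∪ {4*n-2, 4*n},
            setB n ∪ {4*n-1, 4*n+2}} : Multiset (Finset ℕ)) ∨  -- Y₂
       (↑(l.map (smallSet n e)) : Multiset (Finset ℕ)) =
          ({setA n ∪ {4*n-2, 4*n-1, 4*n, 4*n+1, 4*n+2},
            setA n ∪ {4*n},
            setB n ∪ {4*n-2, 4*n+1},
            setB n ∪ {4*n-1, 4*n+2}} : Multiset (Finset ℕ)) ∨  -- Y₃
       (↑(l.map (smallSet n e)) : Multiset (Finset ℕ)) =
          ({setA n ∪ {4*n-2, 4*n-1, 4*n},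
            setA n ∪ {4*n, 4*n+1, 4*n+2},
            setB n ∪ {4*n-2, 4*n+1},
            setB n ∪ {4*n-1, 4*n+2}} : Multiset (Finset ℕ)) ∨  -- Y₄
       (↑(l.map (smallSet n e)) : Multiset (Finset ℕ)) =
          ({setA n ∪ {4*n-2, 4*n-1, 4*n},
            setA n ∪ {4*n-2, 4*n+1, 4*n+2},
            setA n ∪ {4*n, 4*n+1, 4*n+2},
            setB n ∪ {4*n-2, 4*n},
            setB n ∪ {4*n-1, 4*n+1},
            setB n ∪ {4*n-1, 4*n+2}} : Multiset (Finset ℕ)) ∨  -- Z₁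
       (↑(l.map (smallSet n e)) : Multiset (Finset ℕ)) =
          ({setA n ∪ {4*n-2, 4*n-1, 4*n, 4*n+1, 4*n+2},
            setA n ∪ {4*n-2, 4*n+1, 4*n+2},
            setA n ∪ {4*n},
            setB n ∪ {4*n-2, 4*n},
            setB n ∪ {4*n-1, 4*n+1},
            setB n ∪ {4*n-1, 4*n+2}} : Multiset (Finset ℕ))) := by  -- Z₂
  obtain ⟨l, hl, hrange, T, hT, hlen, hmap⟩ := exists_target_rows hn hk he hsupp
  refine ⟨l, hl, hrange, ?_, ?_⟩
  · have : ∀ T ∈ targetCodes, T.length = 2 ∨ T.length = 4 ∨ T.length = 6 := by decide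
    rw [hlen]
    exact this T hT
  · rw [hmap]
    simp only [targetCodes, List.mem_cons, List.not_mem_nil, or_false] at hT
    rcases hT with rfl | rfl | rfl | rfl | rfl | rfl | rfl | rfl | rfl | rfl | rfl | rfl
    · left; rfl
    · right; left; rfl
    · iterate 2 right
      left; rfl
    · iterate 3 right
      left; rfl
    · iterate 4 right
      left; rfl
    · iterate 5 right
      left; rfl
    · iterate 6 right
      left; rfl
    · iterate 7 right
      left; rfl
    · iterate 8 right
      left; rfl
    · iterate 9 right
      left; rfl
    · iterate 10 right
      left; rfl
    · iterate 11 right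
      rfl
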